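/- Let $\varphi$ be a Schwartz function on $\mathbb{R}^n$ and $s \in (0,2)$. Then the fractional Laplacian $\Lambda^s \varphi(x) = c_{s,n} \, \mathrm{p.v.} \int_{\mathbb{R}^n} \frac{\varphi(x) - \varphi(y)}{|x-y|^{n+s}} \, dy$ satisfies the pointwise decay bound $|\Lambda^s \varphi(x)| \leq C(\varphi, s, n) (1+|x|)^{-(n+s)}$ for all $x \in \mathbb{R}^n$. -/

import Mathlib

open MeasureTheory Metric ENNReal Filter Set

lemma aux_decay {E F : Type*} [NormedAddCommGroup E] [NormedSpace ℝ E]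
    [NormedAddCommGroup F] [NormedSpace ℝ F] (ψ : SchwartzMap E F) (r : ℝ) :
    ∃ A : ℝ, 0 ≤ A ∧ ∀ w, ‖ψ w‖ ≤ A * (1 + ‖w‖) ^ (-r) := by
  obtain ⟨k, hk⟩ := exists_nat_ge r
  refine ⟨2 ^ k * (Finset.Iic (k, 0)).sup (fun m => SchwartzMap.seminorm ℝ m.1 m.2) ψ,
    by positivity, fun w => ?_⟩
  have h := SchwartzMap.one_add_le_sup_seminorm_apply (𝕜 := ℝ) (m := (k, 0)) (k := k) (n := 0)
    le_rfl le_rfl ψ w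
  rw [norm_iteratedFDeriv_zero] at h
  have hJ : (1 : ℝ) ≤ 1 + ‖w‖ := by linarith [norm_nonneg w]
  have h2 : (1 + ‖w‖) ^ r ≤ (1 + ‖w‖) ^ k := by
    rw [← Real.rpow_natCast]
    exact Real.rpow_le_rpow_of_exponent_le hJ hk
  rw [Real.rpow_neg (by positivity), ← div_eq_mul_inv, le_div_iff₀ (by positivity)]
  calc ‖ψ w‖ * (1 + ‖w‖) ^ r ≤ ‖ψ w‖ * (1 + ‖w‖) ^ k := by gcongr
    _ ≤ _ := by rw [mul_comm]; exact h

lemma aux_second {E : Type*} [NormedAddCommGroup E] [NormedSpace ℝ E]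
    (φ : SchwartzMap E ℝ) (x z : E) (A : ℝ)
    (hA : ∀ w ∈ closedBall x ‖z‖,
      ‖SchwartzMap.fderivCLM ℝ E _ (SchwartzMap.fderivCLM ℝ E ℝ φ) w‖ ≤ A) :
    |2 * φ x - φ (x + z) - φ (x - z)| ≤ A * ‖z‖ ^ 2 := by
  set ψ := SchwartzMap.fderivCLM ℝ E ℝ φ with hψ
  have hd : ∀ w, DifferentiableAt ℝ φ w := fun w => φ.differentiableAt
  have h1 : ∀ a ∈ closedBall x ‖z‖, ∀ b ∈ closedBall x ‖z‖, ‖ψ b - ψ a‖ ≤ A * ‖b - a‖ := by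
    intro a ha b hb
    refine (convex_closedBall x ‖z‖).norm_image_sub_le_of_norm_fderiv_le (𝕜 := ℝ)
      (fun w _ => ψ.differentiableAt) (fun w hw => ?_) ha hb
    simpa [SchwartzMap.fderivCLM_apply] using hA w hw
  have hx : x ∈ closedBall x ‖z‖ := by simp
  have hxp : x + z ∈ closedBall x ‖z‖ := by simp [dist_eq_norm]
  have hxm : x - z ∈ closedBall x ‖z‖ := by simp [dist_eq_norm]
  have hseg : ∀ w ∈ segment ℝ (x - z) x, w ∈ closedBall x ‖z‖ ∧ w + z ∈ closedBall x ‖z‖ := by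
    intro w hw
    refine ⟨(convex_closedBall x ‖z‖).segment_subset hxm hx hw, ?_⟩
    obtain ⟨a, b, ha, hb, hab, rfl⟩ := hw
    apply (convex_closedBall x ‖z‖).segment_subset hx hxp
    refine ⟨a, b, ha, hb, hab, ?_⟩
    have : z = a • z + b • z := by rw [← add_smul, hab, one_smul]
    nth_rewrite 3 [this]
    module
  have h2 := (convex_segment (𝕜 := ℝ) (x - z) x).norm_image_sub_le_of_norm_hasFDerivWithin_le
    (𝕜 := ℝ) (f := fun w => φ (w + z) - φ w) (f' := fun w => ψ (w + z) - ψ w) (C := A * ‖z‖)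
    (x := x - z) (y := x)
    (fun w _ => by
      have e1 : HasFDerivAt (fun w => φ (w + z)) (ψ (w + z)) w := by
        have := (hd (w + z)).hasFDerivAt
        rw [hψ, SchwartzMap.fderivCLM_apply]
        exact (hasFDerivAt_comp_add_right z).2 this
      have e2 : HasFDerivAt φ (ψ w) w := by
        rw [hψ, SchwartzMap.fderivCLM_apply]
        exact (hd w).hasFDerivAt
      exact (e1.sub e2).hasFDerivWithinAt)
    (fun w hw => by
      have := h1 w (hseg w hw).1 (w + z) (hseg w hw).2
      simpa using this)
    (left_mem_segment ℝ _ _) (right_mem_segment ℝ _ _)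
  simp only [sub_add_cancel, _root_.sub_sub_cancel, Real.norm_eq_abs] at h2
  rw [abs_sub_comm] at h2
  calc _ = |φ x - φ (x - z) - (φ (x + z) - φ x)| := by congr 1; ring
    _ ≤ _ := h2
    _ = _ := by ring

lemma aux_int (n : ℕ) (hn : 1 ≤ n) (s : ℝ) (hs0 : 0 < s) (hs2 : s < 2) :
    Integrable (fun z : EuclideanSpace ℝ (Fin n) =>
      min 1 (‖z‖ ^ 2) * ‖z‖ ^ (-((n : ℝ) + s))) := by
  have : Nonempty (Fin n) := ⟨⟨0, hn⟩⟩
  have : Nontrivial (EuclideanSpace ℝ (Fin n)) := by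
    apply Module.nontrivial_of_finrank_pos (R := ℝ)
    simp; omega
  rw [integrable_fun_norm_addHaar (volume : Measure (EuclideanSpace ℝ (Fin n)))
    (f := fun t : ℝ => min 1 (t ^ 2) * t ^ (-((n : ℝ) + s)))]
  have hcast : ((n - 1 : ℕ) : ℝ) = (n : ℝ) - 1 := by simp [Nat.cast_sub hn]
  rw [← Ioc_union_Ioi_eq_Ioi (zero_le_one (α := ℝ)), integrableOn_union]
  simp only [finrank_euclideanSpace, Fintype.card_fin, smul_eq_mul]
  constructor
  · have := (intervalIntegral.intervalIntegrable_rpow' (a := 0) (b := 1) (r := 1 - s)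
      (by linarith))
    rw [intervalIntegrable_iff_integrableOn_Ioc_of_le zero_le_one] at this
    refine this.congr_fun (fun t ht => ?_) measurableSet_Ioc
    have ht0 : 0 < t := ht.1
    have : t ^ 2 ≤ 1 := by nlinarith [ht.2]
    simp only [min_eq_right this]
    rw [← Real.rpow_natCast, ← Real.rpow_natCast, ← Real.rpow_add ht0, ← Real.rpow_add ht0, hcast]
    congr 1
    push_cast
    ring
  · have := integrableOn_Ioi_rpow_of_lt (a := -1 - s) (c := 1) (by linarith) one_pos
    refine this.congr_fun (fun t ht => ?_) measurableSet_Ioi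
    have ht1 : 1 < t := ht
    have ht0 : 0 < t := by linarith
    have : 1 ≤ t ^ 2 := by nlinarith
    simp only [min_eq_left this, one_mul]
    rw [← Real.rpow_natCast, ← Real.rpow_add ht0, hcast]
    congr 1
    ring

lemma aux_pt {E : Type*} [NormedAddCommGroup E] [NormedSpace ℝ E] (N : ℝ) (hN : 0 < N)
    (φ : SchwartzMap E ℝ) : ∃ K : ℝ, 0 ≤ K ∧ ∀ x z : E,
      |2 * φ x - φ (x + z) - φ (x - z)| * ‖z‖ ^ (-N) ≤
        (1 + ‖x‖) ^ (-N) * (K * (min 1 (‖z‖ ^ 2) * ‖z‖ ^ (-N))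
          + K * (|φ (x + z)| + |φ (x - z)|)) := by
  obtain ⟨A, hA0, hA⟩ := aux_decay
    (SchwartzMap.fderivCLM ℝ E _ (SchwartzMap.fderivCLM ℝ E ℝ φ)) (N + 2)
  obtain ⟨B, hB0, hB⟩ := aux_decay φ N
  have hpos : 0 ≤ A * 2 ^ (N + 2) := by positivity
  have hpos' : (0 : ℝ) ≤ 2 ^ N := by positivity
  refine ⟨A * 2 ^ (N + 2) + 8 * B + 2 ^ N, by positivity, fun x z => ?_⟩
  set K := A * 2 ^ (N + 2) + 8 * B + 2 ^ N with hK
  set J := 1 + ‖x‖ with hJ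
  have hJ1 : 1 ≤ J := by linarith [norm_nonneg x]
  have hJ0 : 0 < J := by linarith
  set P := ‖z‖ ^ (-N) with hP
  have hP0 : 0 ≤ P := by positivity
  have hQ0 : 0 ≤ J ^ (-N) := by positivity
  set m := min 1 (‖z‖ ^ 2) with hm
  have hm0 : 0 ≤ m := by positivity
  rcases le_or_gt ‖z‖ (J / 2) with hz | hz
  · have h2 := aux_second φ x z (A * 2 ^ (N + 2) * (J ^ (-N) * (J ^ 2)⁻¹)) (fun w hw => by
      refine (hA w).trans ?_
      have hw' : J / 2 ≤ 1 + ‖w‖ := by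
        rw [mem_closedBall, dist_eq_norm] at hw
        have : ‖x‖ ≤ ‖w - x‖ + ‖w‖ := by
          rw [norm_sub_rev]
          simpa using norm_add_le (x - w) w
        linarith
      have e : 2 ^ (N + 2) * (J ^ (-N) * (J ^ 2)⁻¹) = (J / 2) ^ (-(N + 2)) := by
        rw [Real.div_rpow hJ0.le (by norm_num), Real.rpow_neg (by norm_num : (0:ℝ) ≤ 2),
          div_inv_eq_mul, neg_add, Real.rpow_add hJ0, Real.rpow_neg hJ0.le 2]
        norm_num
        ring
      rw [mul_assoc, e]
      apply mul_le_mul_of_nonneg_left _ hA0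
      exact Real.rpow_le_rpow_of_nonpos (by positivity) hw' (by linarith))
    have h3 : (J ^ 2)⁻¹ * ‖z‖ ^ 2 ≤ m := by
      rw [inv_mul_eq_div]
      have hz2 : ‖z‖ ^ 2 ≤ J ^ 2 := by
        gcongr
        linarith
      apply le_min
      · rw [div_le_one (by positivity)]
        exact hz2
      · apply div_le_self (by positivity)
        nlinarith
    calc _ ≤ A * 2 ^ (N + 2) * (J ^ (-N) * (J ^ 2)⁻¹) * ‖z‖ ^ 2 * P := by gcongr
      _ = A * 2 ^ (N + 2) * J ^ (-N) * ((J ^ 2)⁻¹ * ‖z‖ ^ 2) * P := by ring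
      _ ≤ K * J ^ (-N) * m * P := by
        gcongr
        linarith
      _ = J ^ (-N) * (K * (m * P)) := by ring
      _ ≤ _ := by
        gcongr
        have : 0 ≤ K * (|φ (x + z)| + |φ (x - z)|) := by positivity
        linarith
  · have hz0 : 0 < ‖z‖ := by linarith
    have hPle : P ≤ 2 ^ N * J ^ (-N) := by
      have e : 2 ^ N * J ^ (-N) = (J / 2) ^ (-N) := by
        rw [Real.div_rpow hJ0.le (by norm_num), Real.rpow_neg (by norm_num : (0:ℝ) ≤ 2),
          div_inv_eq_mul, mul_comm]
      rw [e]
      exact Real.rpow_le_rpow_of_nonpos (by positivity) hz.le (by linarith)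
    have hm4 : 1 ≤ 4 * m := by
      have : 1 / 4 ≤ m := le_min (by norm_num) (by nlinarith)
      linarith
    have hφx : |φ x| ≤ B * J ^ (-N) := hB x
    have htri : |2 * φ x - φ (x + z) - φ (x - z)| ≤
        2 * |φ x| + (|φ (x + z)| + |φ (x - z)|) := by
      have a1 := abs_sub (2 * φ x - φ (x + z)) (φ (x - z))
      have a2 := abs_sub (2 * φ x) (φ (x + z))
      rw [abs_mul, abs_two] at a2
      linarith
    set S := |φ (x + z)| + |φ (x - z)| with hS
    have hS0 : 0 ≤ S := by positivity
    calc _ ≤ (2 * |φ x| + S) * P := by gcongr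
      _ = 2 * |φ x| * P * 1 + S * P := by ring
      _ ≤ 2 * (B * J ^ (-N)) * P * (4 * m) + S * (2 ^ N * J ^ (-N)) := by gcongr
      _ = J ^ (-N) * (8 * B * (m * P) + 2 ^ N * S) := by ring
      _ ≤ J ^ (-N) * (K * (m * P) + K * S) := by
        gcongr
        · linarith
        · linarith

/-- if `φ` is Schwartz on `ℝⁿ`, `s ∈ (0,2)`, and `L = Λ^s φ` is the fractional
Laplacian, given by the principal value
`L x = lim_{ε → 0⁺} c ∫_{|x-y| ≥ ε} (φ(x) - φ(y)) / |x-y|^{n+s} dy`,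
then `|L x| ≤ C(φ,s,n) (1+|x|)^{-(n+s)}` for all `x`. -/
theorem stmt5 (n : ℕ) (hn : 1 ≤ n) (s : ℝ) (hs0 : 0 < s) (hs2 : s < 2)
    (c : ℝ) (hc : 0 < c)
    (φ : SchwartzMap (EuclideanSpace ℝ (Fin n)) ℝ)
    (L : EuclideanSpace ℝ (Fin n) → ℝ)
    (hL : ∀ x, Tendsto
      (fun ε : ℝ =>
        c * ∫ y in {y : EuclideanSpace ℝ (Fin n) | ε ≤ dist x y},
          (φ x - φ y) / dist x y ^ ((n : ℝ) + s))
      (nhdsWithin 0 (Set.Ioi 0)) (nhds (L x))) :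
    ∃ C : ℝ, 0 < C ∧ ∀ x, |L x| ≤ C * (1 + ‖x‖) ^ (-((n : ℝ) + s)) := by
  have hN : 0 < (n : ℝ) + s := by positivity
  obtain ⟨K, hK0, hK⟩ := aux_pt ((n : ℝ) + s) hN φ
  have hI := aux_int n hn s hs0 hs2
  set N := (n : ℝ) + s with hNdef
  set h : EuclideanSpace ℝ (Fin n) → ℝ := fun z => min 1 (‖z‖ ^ 2) * ‖z‖ ^ (-N) with hh
  have hh0 : 0 ≤ ∫ z, h z := integral_nonneg (fun z => by simp only [hh]; positivity)
  have hφi : Integrable (fun y => |φ y|) := φ.integrable.abs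
  have hφ0 : 0 ≤ ∫ y, |φ y| := integral_nonneg (fun z => abs_nonneg _)
  set D := K * (∫ z, h z) + K * ((∫ y, |φ y|) + ∫ y, |φ y|) with hD
  have hD0 : 0 ≤ D := by positivity
  refine ⟨c * D + 1, by positivity, fun x => ?_⟩
  have hJ : 0 ≤ (1 + ‖x‖) ^ (-N) := by positivity
  have hlim := (hL x).abs
  refine le_of_tendsto hlim (Eventually.of_forall fun ε => ?_)
  set f : EuclideanSpace ℝ (Fin n) → ℝ :=
    indicator {z | ε ≤ ‖z‖} (fun z => (φ x - φ (x + z)) * ‖z‖ ^ (-N)) with hf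
  have hfe : ∫ y in {y : EuclideanSpace ℝ (Fin n) | ε ≤ dist x y},
      (φ x - φ y) / dist x y ^ N = ∫ z, f z := by
    rw [← integral_indicator (measurableSet_le measurable_const (by fun_prop)),
      ← integral_add_left_eq_self _ x]
    congr 1
    ext z
    simp only [hf, indicator, mem_ofPred_eq, dist_self_add_right]
    split_ifs
    · rw [Real.rpow_neg (norm_nonneg z), div_eq_mul_inv]
    · rfl
  have hmain : |∫ z, f z| ≤ D * (1 + ‖x‖) ^ (-N) := by
    by_cases hfi : Integrable f
    · have hfn : ∫ z, f (-z) = ∫ z, f z := integral_neg_eq_self f volume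
      have i1 : Integrable (fun z => |φ (x + z)|) := hφi.comp_add_left x
      have i2 : Integrable (fun z => |φ (x - z)|) := hφi.comp_sub_left x
      have i3 : Integrable (fun z => K * (|φ (x + z)| + |φ (x - z)|)) :=
        (i1.add i2).const_mul K
      have hb : ‖∫ z, (f z + f (-z))‖ ≤ ∫ z, (1 + ‖x‖) ^ (-N) *
          (K * h z + K * (|φ (x + z)| + |φ (x - z)|)) := by
        refine norm_integral_le_of_norm_le
          (((hI.const_mul K).add ((i1.add i2).const_mul K)).const_mul _) ?_
        refine Eventually.of_forall fun z => ?_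
        have hkz := hK x z
        simp only [hf, indicator, mem_ofPred_eq, norm_neg]
        split_ifs
        · refine le_trans (le_of_eq ?_) hkz
          rw [← sub_eq_add_neg, ← add_mul, Real.norm_eq_abs, abs_mul,
            abs_of_nonneg (Real.rpow_nonneg (norm_nonneg z) _)]
          congr 2
          ring
        · refine le_trans ?_ hkz
          simp only [add_zero, norm_zero]
          positivity
      rw [integral_add hfi hfi.comp_neg, hfn, integral_const_mul,
        integral_add (hI.const_mul K) i3, integral_const_mul,
        integral_const_mul, integral_add i1 i2,
        integral_add_left_eq_self (fun y => |φ y|) x,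
        integral_sub_left_eq_self (fun y => |φ y|) volume x, Real.norm_eq_abs,
        ← two_mul, abs_mul, abs_two] at hb
      have := abs_nonneg (∫ z, f z)
      rw [mul_comm D]
      linarith
    · rw [integral_undef hfi, abs_zero]
      positivity
  rw [hfe, abs_mul, abs_of_pos hc]
  calc c * |∫ z, f z| ≤ c * (D * (1 + ‖x‖) ^ (-N)) := by gcongr
    _ ≤ _ := by linarith
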